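/- Let $X$ be a standard Borel space with a Borel probability measure $\mu$, let $Y$ be a Polish space, and let $p: Y \to X$ be a Borel map with $\mu(p(Y)) = 1$ such that $p^{-1}(x)$ is compact for $\mu$-almost all $x \in X$. Let $\Gamma$ be a commutative monoid acting on $Y$ by continuous maps $S_\gamma: Y \to Y$ and acting on $X$ by $\mu$-preserving measurable maps $T_\gamma: X \to X$, such that $p \circ S_\gamma = T_\gamma \circ p$ for all $\gamma \in \Gamma$. Then there exists a Borel probability measure $\nu$ on $Y$ with $(S_\gamma)_*\nu = \nu$ for all $\gamma \in \Gamma$ and $p_*\nu = \mu$. -/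

import Mathlib

open MeasureTheory Set Filter Topology
open scoped ENNReal NNReal BoundedContinuousFunction CompactlySupported

/-- A box neighbourhood principle in Baire space: an open set containing the compact box
`{x | ∀ i, x i ≤ k i}` contains one of the boxes constraining only finitely many coordinates. -/
lemma exists_box_subset_of_isOpen (k : ℕ → ℕ) {V : Set (ℕ → ℕ)} (hV : IsOpen V)
    (hkV : Set.univ.pi (fun i => Set.Iic (k i)) ⊆ V) :
    ∃ n, {x : ℕ → ℕ | ∀ i < n, x i ≤ k i} ⊆ V := by
  by_contra! h
  choose x hxk hxV using fun n => Set.not_subset.1 (h n)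
  have hcpt : IsCompact (Set.univ.pi fun i => Set.Iic (k i)) :=
    isCompact_univ_pi fun i => (Set.finite_Iic (k i)).isCompact
  obtain ⟨a, ha, φ, hφ, hlim⟩ :=
    hcpt.tendsto_subseq (x := fun n i => min (x n i) (k i)) 
      fun n i _ => min_le_right (x n i) (k i)
  have hlim' : Tendsto (x ∘ φ) atTop (𝓝 a) := by
    rw [tendsto_pi_nhds] at hlim ⊢
    refine fun i => (hlim i).congr' ?_
    filter_upwards [eventually_gt_atTop i] with n hn
    exact min_eq_left (hxk (φ n) i (hn.trans_le (hφ.id_le n)))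
  obtain ⟨n, hn⟩ := (hlim'.eventually (hV.mem_nhds (hkV ha))).exists
  exact hxV _ hn

/-- Analytic sets are inner regular with respect to compact sets. -/
lemma MeasureTheory.AnalyticSet.exists_isCompact_le_measure {α : Type*} [TopologicalSpace α]
    [MeasurableSpace α] (μ : Measure α) [μ.OuterRegular] {s : Set α}
    (hs : AnalyticSet s) {c : ℝ≥0∞} (hc : c < μ s) :
    ∃ K ⊆ s, IsCompact K ∧ c ≤ μ K := by
  rw [AnalyticSet] at hs
  obtain rfl | ⟨f, hf, rfl⟩ := hs
  · simp at hc
  have step (n : ℕ) (S : {S : Set (ℕ → ℕ) // c < μ (f '' S)}) :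
      ∃ j, c < μ (f '' (S.1 ∩ {x | x n ≤ j})) := by
    have hU : f '' S.1 = ⋃ j, f '' (S.1 ∩ {x | x n ≤ j}) := by
      rw [← image_iUnion, ← inter_iUnion]
      congr 1
      ext x
      simpa using fun _ => ⟨x n, le_rfl⟩
    have hmono : Monotone fun j => f '' (S.1 ∩ {x | x n ≤ j}) := fun a b hab =>
      image_mono (inter_subset_inter_right _ fun x (hx : x n ≤ a) => hx.trans hab)
    have h := S.2
    rw [hU, hmono.measure_iUnion] at h
    exact lt_iSup_iff.1 h
  choose j hj using step
  let S : ℕ → {S : Set (ℕ → ℕ) // c < μ (f '' S)} := fun n =>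
    Nat.rec ⟨Set.univ, by simpa using hc⟩ (fun n S => ⟨S.1 ∩ {x | x n ≤ j n S}, hj n S⟩) n
  let k : ℕ → ℕ := fun n => j n (S n)
  have hS (n : ℕ) : (S n).1 = {x | ∀ i < n, x i ≤ k i} := by
    induction n with
    | zero => simp [S]
    | succ n ih =>
      change (S n).1 ∩ {x | x n ≤ k n} = _
      rw [ih]
      ext x
      exact ⟨fun h i hi => (Nat.lt_succ_iff_lt_or_eq.1 hi).elim (h.1 i) fun e => e ▸ h.2,
        fun h => ⟨fun i hi => h i (hi.trans n.lt_succ_self), h n n.lt_succ_self⟩⟩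
  refine ⟨f '' Set.univ.pi fun i => Set.Iic (k i), image_subset_range _ _,
    (isCompact_univ_pi fun i => (Set.finite_Iic (k i)).isCompact).image hf, ?_⟩
  by_contra! hlt
  obtain ⟨U, hKU, hU, hUc⟩ := Set.exists_isOpen_lt_of_lt _ _ hlt
  obtain ⟨n, hn⟩ := exists_box_subset_of_isOpen k (hU.preimage hf) (image_subset_iff.1 hKU)
  refine absurd (S n).2 (not_lt.2 ((measure_mono ?_).trans hUc.le))
  rw [hS]
  exact image_subset_iff.2 hn

/-- Analytic sets are universally measurable. -/
lemma MeasureTheory.AnalyticSet.nullMeasurableSet {α : Type*} [TopologicalSpace α] [T2Space α]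
    [MeasurableSpace α] [OpensMeasurableSpace α] (μ : Measure α) [IsFiniteMeasure μ]
    [μ.OuterRegular] {s : Set α} (hs : AnalyticSet s) : NullMeasurableSet s μ := by
  rcases eq_or_ne (μ s) 0 with h0 | h0
  · exact NullMeasurableSet.of_null h0
  obtain ⟨u, -, hu, hulim⟩ := exists_seq_strictMono_tendsto' (pos_iff_ne_zero.2 h0)
  choose K hKs hK hKu using fun n => hs.exists_isCompact_le_measure μ (hu n).2
  have hM : MeasurableSet (⋃ n, K n) := .iUnion fun n => (hK n).measurableSet
  have hle : μ s ≤ μ (⋃ n, K n) := le_of_tendsto' hulim fun n =>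
    (hKu n).trans (measure_mono (subset_iUnion _ n))
  have hsub : ⋃ n, K n ⊆ toMeasurable μ s :=
    (iUnion_subset hKs).trans (subset_toMeasurable μ s)
  have hae : (⋃ n, K n : Set α) =ᵐ[μ] toMeasurable μ s :=
    ae_eq_of_subset_of_measure_ge hsub (by rwa [measure_toMeasurable]) hM.nullMeasurableSet
      (measure_ne_top _ _)
  refine hM.nullMeasurableSet.congr (EventuallyLE.antisymm ?_ ?_)
  · exact (iUnion_subset hKs).eventuallyLE
  · exact (subset_toMeasurable μ s).eventuallyLE.trans_eq hae.symm

section Fibers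

variable {X Y : Type*} [MeasurableSpace X] [StandardBorelSpace X] {μ : Measure X}
  [IsFiniteMeasure μ] [TopologicalSpace Y] [PolishSpace Y] [MeasurableSpace Y] [BorelSpace Y]
  {p : Y → X}

/-- If almost all fibers of `p` are compact, then `F ↦ μ (p '' F)` is continuous along decreasing
sequences of closed sets. -/
lemma exists_measure_image_lt_of_antitone (hp : Measurable p)
    (hfib : ∀ᵐ x ∂μ, IsCompact (p ⁻¹' {x})) {F : ℕ → Set Y} (hF : Antitone F)
    (hFc : ∀ n, IsClosed (F n)) {c : ℝ≥0∞} (hc : μ (p '' ⋂ n, F n) < c) :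
    ∃ n, μ (p '' F n) < c := by
  let := upgradeStandardBorel X
  have hnull (n : ℕ) : NullMeasurableSet (p '' F n) μ :=
    ((hFc n).measurableSet.analyticSet_image hp).nullMeasurableSet μ
  have hlim := tendsto_measure_iInter_atTop hnull (fun a b hab => image_mono (hF hab))
    ⟨0, measure_ne_top _ _⟩
  have hle : μ (⋂ n, p '' F n) ≤ μ (p '' ⋂ n, F n) := by
    refine measure_mono_ae ?_
    filter_upwards [hfib] with x hx hxF
    have hxF' (n : ℕ) : (p ⁻¹' {x} ∩ F n).Nonempty := by
      obtain ⟨y, hy, hyx⟩ := mem_iInter.1 hxF n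
      exact ⟨y, hyx, hy⟩
    obtain ⟨y, hy⟩ := IsCompact.nonempty_iInter_of_sequence_nonempty_isCompact_isClosed
      (fun n => p ⁻¹' {x} ∩ F n) (fun n => inter_subset_inter_right _ (hF n.le_succ)) hxF'
      (hx.inter_right (hFc 0)) (fun n => hx.isClosed.inter (hFc n))
    rw [mem_iInter] at hy
    exact ⟨y, mem_iInter.2 fun n => (hy n).2, (hy 0).1⟩
  exact (hlim.eventually_lt_const (hle.trans_lt hc)).exists

/-- If almost all fibers of `p` are compact, then most fibers lie in a common compact set. -/
lemma exists_isCompact_measure_image_compl_le (hp : Measurable p)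
    (hfib : ∀ᵐ x ∂μ, IsCompact (p ⁻¹' {x})) {ε : ℝ≥0∞} (hε : ε ≠ 0) :
    ∃ K : Set Y, IsCompact K ∧ μ (p '' Kᶜ) ≤ ε := by
  cases isEmpty_or_nonempty Y
  · exact ⟨∅, isCompact_empty, by simp [Set.eq_empty_of_isEmpty]⟩
  let := TopologicalSpace.upgradeIsCompletelyMetrizable Y
  let seq := TopologicalSpace.denseSeq Y
  have hdense : DenseRange seq := TopologicalSpace.denseRange_denseSeq Y
  obtain ⟨r, hr, hr0, hrlim⟩ := exists_seq_strictAnti_tendsto (0 : ℝ)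
  obtain ⟨δ, hδ, hδε⟩ := ENNReal.exists_pos_sum_of_countable' hε ℕ
  have hcover (n : ℕ) : ∃ m, μ (p '' ⋂ i ≤ m, (Metric.ball (seq i) (r n))ᶜ) < δ n := by
    refine exists_measure_image_lt_of_antitone hp hfib ?_ ?_ ?_
    · exact fun a b hab => biInter_subset_biInter_left fun i (hi : i ≤ a) => hi.trans hab
    · exact fun m => isClosed_biInter fun i _ => Metric.isOpen_ball.isClosed_compl
    · have : ⋂ m, ⋂ i ≤ m, (Metric.ball (seq i) (r n))ᶜ = ∅ := by
        rw [Set.eq_empty_iff_forall_notMem]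
        intro y hy
        obtain ⟨i, hi⟩ := hdense.exists_dist_lt y (hr0 n)
        simp only [mem_iInter] at hy
        exact hy i i le_rfl hi
      rw [this, image_empty, measure_empty]
      exact hδ n
  choose u hu using hcover
  refine ⟨⋂ n, ⋃ i ≤ u n, Metric.closedBall (seq i) (r n), ?_, ?_⟩
  · refine TotallyBounded.isCompact_of_isClosed (Metric.totallyBounded_iff.2 fun ε hε => ?_)
      (isClosed_iInter fun n => (Set.finite_Iic (u n)).isClosed_biUnion
        fun i _ => Metric.isClosed_closedBall)
    obtain ⟨n, hn⟩ := (hrlim.eventually_lt_const hε).exists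
    refine ⟨seq '' Set.Iic (u n), (Set.finite_Iic (u n)).image _, ?_⟩
    rw [biUnion_image]
    exact (iInter_subset _ n).trans
      (iUnion₂_mono fun i _ => Metric.closedBall_subset_ball hn)
  · rw [compl_iInter, image_iUnion]
    refine (measure_iUnion_le _).trans (le_trans (ENNReal.tsum_le_tsum fun n => ?_) hδε.le)
    refine (measure_mono (image_mono ?_)).trans (hu n).le
    rw [compl_iUnion₂]
    exact iInter₂_mono fun i _ => compl_subset_compl.2 Metric.ball_subset_closedBall

end Fibers

section InvariantExtension

variable {Γ E : Type*} [CommMonoid Γ] [SeminormedAddCommGroup E] [NormedSpace ℝ E]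
  (U : Γ →* Module.End ℝ E)

lemma mul_mem_convexHull_range_monoidHom {A B : Module.End ℝ E}
    (hA : A ∈ convexHull ℝ (range U)) (hB : B ∈ convexHull ℝ (range U)) :
    A * B ∈ convexHull ℝ (range U) := by
  have hγ (γ : Γ) : B ∈ (LinearMap.mulLeft ℝ (U γ)) ⁻¹' convexHull ℝ (range U) := by
    refine convexHull_min ?_ ((convex_convexHull ℝ _).linear_preimage _) hB
    rintro _ ⟨δ, rfl⟩
    exact subset_convexHull ℝ _ ⟨γ * δ, map_mul U γ δ⟩
  have : A ∈ (LinearMap.mulRight ℝ B) ⁻¹' convexHull ℝ (range U) := by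
    refine convexHull_min ?_ ((convex_convexHull ℝ _).linear_preimage _) hA
    rintro _ ⟨γ, rfl⟩
    exact hγ γ
  exact this

lemma commute_of_mem_convexHull_range_monoidHom {A B : Module.End ℝ E}
    (hA : A ∈ convexHull ℝ (range U)) (hB : B ∈ convexHull ℝ (range U)) : Commute A B := by
  have hconv (B : Module.End ℝ E) : Convex ℝ {A | Commute A B} :=
    fun A hA A' hA' a b _ _ _ => (hA.smul_left a).add_left (hA'.smul_left b)
  refine convexHull_min (t := {A | Commute A B}) ?_ (hconv B) hA
  rintro _ ⟨γ, rfl⟩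
  refine Commute.symm (convexHull_min (t := {B | Commute B (U γ)}) ?_ (hconv _) hB)
  rintro _ ⟨δ, rfl⟩
  exact (Commute.all δ γ).map U

variable {U}

lemma norm_apply_le_of_mem_convexHull (hU : ∀ γ v, ‖U γ v‖ ≤ ‖v‖) {A : Module.End ℝ E}
    (hA : A ∈ convexHull ℝ (range U)) (v : E) : ‖A v‖ ≤ ‖v‖ := by
  refine convexHull_min (t := {A | ‖A v‖ ≤ ‖v‖}) ?_ ?_ hA
  · rintro _ ⟨γ, rfl⟩
    exact hU γ v
  · have := (convex_closedBall (0 : E) ‖v‖).linear_preimage (LinearMap.applyₗ (R := ℝ) v)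
    simpa [preimage, Metric.closedBall] using this

lemma exists_mem_convexHull_norm_apply_sub_le (hU : ∀ γ v, ‖U γ v‖ ≤ ‖v‖)
    (γ : Γ) (v : E) {ε : ℝ} (hε : 0 < ε) :
    ∃ A ∈ convexHull ℝ (range U), ‖A (v - U γ v)‖ ≤ ε := by
  obtain ⟨n, hn⟩ := exists_nat_gt (2 * ‖v‖ / ε)
  have hn0 : (0 : ℝ) < n := lt_of_le_of_lt (by positivity) hn
  refine ⟨∑ j ∈ Finset.range n, (n : ℝ)⁻¹ • U (γ ^ j), ?_, ?_⟩
  · refine (convex_convexHull ℝ _).sum_mem (fun _ _ => by positivity) ?_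
      fun j _ => subset_convexHull ℝ _ ⟨γ ^ j, rfl⟩
    simp [hn0.ne']
  · have hsum : (∑ j ∈ Finset.range n, (n : ℝ)⁻¹ • U (γ ^ j)) (v - U γ v)
        = (n : ℝ)⁻¹ • (v - U (γ ^ n) v) := by
      have h := Finset.sum_range_sub' (fun j => U (γ ^ j) v) n
      rw [← Finset.smul_sum, LinearMap.smul_apply, LinearMap.sum_apply]
      simpa [pow_succ] using congrArg ((n : ℝ)⁻¹ • ·) h
    rw [hsum, norm_smul, norm_inv, Real.norm_natCast, inv_mul_le_iff₀ hn0]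
    rw [div_lt_iff₀ hε] at hn
    have h1 := norm_sub_le v (U (γ ^ n) v)
    have h2 := hU (γ ^ n) v
    linarith

/-- Elements of the span of the coboundaries of a commuting family of contractions can be made
arbitrarily small by averaging. -/
lemma exists_mem_convexHull_norm_apply_le_of_mem_span (hU : ∀ γ v, ‖U γ v‖ ≤ ‖v‖) {d : E}
    (hd : d ∈ Submodule.span ℝ {w : E | ∃ γ v, w = v - U γ v}) {ε : ℝ} (hε : 0 < ε) :
    ∃ A ∈ convexHull ℝ (range U), ‖A d‖ ≤ ε := by
  induction hd using Submodule.span_induction generalizing ε with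
  | mem w hw =>
    obtain ⟨γ, v, rfl⟩ := hw
    exact exists_mem_convexHull_norm_apply_sub_le hU γ v hε
  | zero => exact ⟨1, subset_convexHull ℝ _ ⟨1, map_one U⟩, by simpa using hε.le⟩
  | add x y _ _ hx hy =>
    obtain ⟨A, hA, hAx⟩ := hx (half_pos hε)
    obtain ⟨B, hB, hBy⟩ := hy (half_pos hε)
    refine ⟨A * B, mul_mem_convexHull_range_monoidHom U hA hB, ?_⟩
    have h1 : ‖(A * B) x‖ ≤ ε / 2 := by
      rw [(commute_of_mem_convexHull_range_monoidHom U hA hB).eq]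
      exact (norm_apply_le_of_mem_convexHull hU hB _).trans hAx
    have h2 : ‖(A * B) y‖ ≤ ε / 2 := (norm_apply_le_of_mem_convexHull hU hA _).trans hBy
    rw [map_add]
    linarith [norm_add_le ((A * B) x) ((A * B) y)]
  | smul a x _ hx =>
    obtain ⟨A, hA, hAx⟩ := hx (ε := ε / (‖a‖ + 1)) (by positivity)
    refine ⟨A, hA, ?_⟩
    rw [map_smul, norm_smul]
    rw [le_div_iff₀ (by positivity)] at hAx
    nlinarith [norm_nonneg (A x)]

/-- An invariant version of the M. Riesz extension theorem, for a commuting family of contractions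
preserving a cone and fixing an order unit `e` of it. -/
lemma exists_invariant_linearMap_nonneg (hU : ∀ γ v, ‖U γ v‖ ≤ ‖v‖)
    (s : PointedCone ℝ E)
    (hs : ∀ γ, ∀ v ∈ s, U γ v ∈ s) (e : E) (he : ∀ γ, U γ e = e)
    (hunit : ∀ v, ‖v‖ • e + v ∈ s) (hpos : ∀ c : ℝ, c • e ∈ s → 0 ≤ c) :
    ∃ Λ : E →ₗ[ℝ] ℝ, Λ e = 1 ∧ (∀ γ v, Λ (U γ v) = Λ v) ∧ ∀ v ∈ s, 0 ≤ Λ v := by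
  let D : Submodule ℝ E := Submodule.span ℝ {w : E | ∃ γ v, w = v - U γ v}
  have he0 : e ≠ 0 := by
    rintro rfl
    have := hpos (-1) (by simp)
    linarith
  have hfix {A : Module.End ℝ E} (hA : A ∈ convexHull ℝ (range U)) : A e = e := by
    refine convexHull_min (t := {A | A e = e}) ?_ ?_ hA
    · rintro _ ⟨γ, rfl⟩
      exact he γ
    · exact (convex_singleton e).linear_preimage (LinearMap.applyₗ (R := ℝ) e)
  have hpres {A : Module.End ℝ E} (hA : A ∈ convexHull ℝ (range U)) {v : E} (hv : v ∈ s) :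
      A v ∈ s := by
    refine convexHull_min (t := {A | A v ∈ s}) ?_ ?_ hA
    · rintro _ ⟨γ, rfl⟩
      exact hs γ v hv
    · exact s.convex.linear_preimage (LinearMap.applyₗ (R := ℝ) v)
  have happ (c : ℝ) (hc : c • e ∈ (LinearPMap.mkSpanSingleton e (1 : ℝ) he0).domain) :
      LinearPMap.mkSpanSingleton e (1 : ℝ) he0 ⟨c • e, hc⟩ = c :=
    (LinearPMap.mkSpanSingleton'_apply (σ := RingHom.id ℝ) e (1 : ℝ) _ c hc).trans (mul_one c)
  obtain ⟨Λ, hΛ, hΛs⟩ := riesz_extension (s ⊔ D.restrictScalars ℝ≥0)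
    (LinearPMap.mkSpanSingleton e (1 : ℝ) he0) (by
      rintro ⟨x, hx⟩ hxs
      obtain ⟨c, rfl⟩ := Submodule.mem_span_singleton.1 hx
      rw [happ]
      obtain ⟨f, hf, d, hd, hfd⟩ := Submodule.mem_sup.1 hxs
      refine le_of_forall_pos_le_add fun ε hε => ?_
      obtain ⟨A, hA, hAd⟩ := exists_mem_convexHull_norm_apply_le_of_mem_span hU hd hε
      have hmem := s.add_mem (hpres hA hf) (hunit (A d))
      have hc : A f + (‖A d‖ • e + A d) = (c + ‖A d‖) • e := by
        have h : A f + A d = c • e := by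
          rw [← map_add, hfd, map_smul, hfix hA]
        rw [add_smul, ← h]
        abel
      rw [hc] at hmem
      linarith [hpos _ hmem])
    (fun y => ⟨⟨‖y‖ • e, Submodule.smul_mem _ _ (Submodule.mem_span_singleton_self e)⟩,
      Submodule.mem_sup_left (hunit y)⟩)
  refine ⟨Λ, ?_, fun γ v => ?_, fun v hv => hΛs v (Submodule.mem_sup_left hv)⟩
  · have h := hΛ ⟨(1 : ℝ) • e, Submodule.smul_mem _ _ (Submodule.mem_span_singleton_self e)⟩
    rw [happ] at h
    simpa using h
  · have hmem : v - U γ v ∈ D := Submodule.subset_span ⟨γ, v, rfl⟩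
    have h1 := hΛs _ (Submodule.mem_sup_right hmem)
    have h2 := hΛs _ (Submodule.mem_sup_right (D.neg_mem hmem))
    simp only [map_neg, map_sub] at h1 h2
    linarith

end InvariantExtension

/-- The Riesz–Markov–Kakutani theorem on a compact space, for bounded continuous functions. -/
lemma exists_isProbabilityMeasure_integral_eq_of_compactSpace {Z : Type*} [TopologicalSpace Z]
    [CompactSpace Z] [T2Space Z] [MeasurableSpace Z] [BorelSpace Z] (Λ : (Z →ᵇ ℝ) →ₗ[ℝ] ℝ)
    (hpos : ∀ f : Z →ᵇ ℝ, 0 ≤ f → 0 ≤ Λ f) (h1 : Λ 1 = 1) :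
    ∃ m : Measure Z, IsProbabilityMeasure m ∧ ∀ f : Z →ᵇ ℝ, ∫ z, f z ∂m = Λ f := by
  let Φ : C_c(Z, ℝ) →ₚ[ℝ] ℝ := PositiveLinearMap.mk₀
    { toFun := fun g => Λ (BoundedContinuousFunction.mkOfCompact g.toContinuousMap)
      map_add' := fun g g' => by rw [← map_add]; rfl
      map_smul' := fun c g => by rw [RingHom.id_apply, ← map_smul]; rfl }
    (fun g hg => hpos _ hg)
  have hint (f : Z →ᵇ ℝ) : ∫ z, f z ∂(RealRMK.rieszMeasure Φ) = Λ f :=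
    RealRMK.integral_rieszMeasure Φ
      { toFun := f, hasCompactSupport' := HasCompactSupport.of_compactSpace _ }
  have := CompactSpace.isFiniteMeasure (μ := RealRMK.rieszMeasure Φ)
  refine ⟨RealRMK.rieszMeasure Φ, ⟨?_⟩, hint⟩
  have h := hint 1
  rw [h1] at h
  simpa [measureReal_def, ENNReal.toReal_eq_one_iff] using h

/-- Urysohn's lemma for bounded continuous functions. -/
lemma IsClosed.exists_boundedContinuousFunction_zero_one {Z : Type*} [TopologicalSpace Z]
    [NormalSpace Z] {F U : Set Z} (hF : IsClosed F) (hU : IsOpen U) (hFU : F ⊆ U) :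
    ∃ f : Z →ᵇ ℝ, 0 ≤ f ∧ (∀ z, f z ≤ 1) ∧ (∀ z ∈ F, f z = 1) ∧ ∀ z ∉ U, f z = 0 := by
  obtain ⟨f, hf0, hf1, hf⟩ := exists_continuous_zero_one_of_isClosed hU.isClosed_compl hF
    (disjoint_compl_left_iff_subset.2 hFU)
  exact ⟨BoundedContinuousFunction.mkOfBound f 1 fun x y =>
    Real.dist_le_of_mem_Icc_01 (hf x) (hf y), fun z => (hf z).1, fun z => (hf z).2, hf1, hf0⟩

/-- A lower bound on the measure of a closed set from Urysohn functions. -/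
lemma IsClosed.ofReal_le_measure_of_forall_le_integral {Z : Type*} [TopologicalSpace Z]
    [NormalSpace Z] [MeasurableSpace Z] [OpensMeasurableSpace Z] {m : Measure Z}
    [IsFiniteMeasure m] [m.OuterRegular] {F : Set Z} (hF : IsClosed F) {c : ℝ}
    (h : ∀ f : Z →ᵇ ℝ, 0 ≤ f → (∀ z ∈ F, f z = 1) → c ≤ ∫ z, f z ∂m) :
    ENNReal.ofReal c ≤ m F := by
  by_contra! hlt
  obtain ⟨U, hFU, hU, hUc⟩ := Set.exists_isOpen_lt_of_lt _ _ hlt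
  obtain ⟨f, hf0, hf1, hfF, hfU⟩ := hF.exists_boundedContinuousFunction_zero_one hU hFU
  have hle : ∫ z, f z ∂m ≤ m.real U := by
    rw [← integral_indicator_one hU.measurableSet]
    refine integral_mono (f.integrable m)
      ((integrable_const 1).indicator hU.measurableSet) fun z => ?_
    by_cases hz : z ∈ U
    · simpa [hz] using hf1 z
    · simpa [hz] using (hfU z hz).le
  exact absurd hUc (not_lt.2 (ENNReal.ofReal_le_of_le_toReal ((h f hf0 hfF).trans hle)))

/-- A Riesz representation theorem on Polish spaces: a tight positive normalized linear functional
on bounded continuous functions is integration against a probability measure. -/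
lemma exists_isProbabilityMeasure_integral_eq_of_tight {Y : Type*} [TopologicalSpace Y]
    [PolishSpace Y] [MeasurableSpace Y] [BorelSpace Y] (Λ : (Y →ᵇ ℝ) →ₗ[ℝ] ℝ)
    (hpos : ∀ f : Y →ᵇ ℝ, 0 ≤ f → 0 ≤ Λ f) (h1 : Λ 1 = 1)
    (htight : ∀ ε : ℝ, 0 < ε → ∃ K : Set Y, IsCompact K ∧
      ∀ f : Y →ᵇ ℝ, (∀ y, f y ≤ 1) → (∀ y ∈ K, f y ≤ 0) → Λ f ≤ ε) :
    ∃ ν : Measure Y, IsProbabilityMeasure ν ∧ ∀ f : Y →ᵇ ℝ, ∫ y, f y ∂ν = Λ f := by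
  obtain ⟨ι, hι⟩ : ∃ ι : Y → ℕ → unitInterval, IsEmbedding ι := by
    let := TopologicalSpace.upgradeIsCompletelyMetrizable Y
    exact Metric.PiNatEmbed.exists_embedding_to_hilbert_cube
  have hme : MeasurableEmbedding ι := hι.continuous.measurableEmbedding hι.injective
  let ιC : C(Y, ℕ → unitInterval) := ⟨ι, hι.continuous⟩
  obtain ⟨m, hm, hmint⟩ := exists_isProbabilityMeasure_integral_eq_of_compactSpace
    (Λ ∘ₗ (BoundedContinuousFunction.compContinuousCLM (𝕜 := ℝ) (β := ℝ) ιC).toLinearMap)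
    (fun f hf => hpos _ fun y => hf (ι y)) h1
  have hmK {ε : ℝ} {K : Set Y} (hK : IsCompact K)
      (hKε : ∀ f : Y →ᵇ ℝ, (∀ y, f y ≤ 1) → (∀ y ∈ K, f y ≤ 0) → Λ f ≤ ε) :
      ENNReal.ofReal (1 - ε) ≤ m (ι '' K) := by
    refine (hK.image hι.continuous).isClosed.ofReal_le_measure_of_forall_le_integral
      fun f hf hfK => ?_
    rw [hmint]
    have h := hKε (1 - f.compContinuous ιC) (fun y => sub_le_self 1 (hf (ι y)))
      fun y hy => by simpa [ιC] using (hfK _ (mem_image_of_mem ι hy)).ge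
    rw [map_sub, h1] at h
    change _ ≤ Λ (f.compContinuous ιC)
    linarith
  have hrange : m (range ι) = 1 := by
    refine le_antisymm prob_le_one (le_of_forall_lt fun c hc => ?_)
    have hc' : c ≠ ⊤ := (hc.trans_le le_top).ne
    have hc1 : c.toReal < 1 := by simpa using (ENNReal.toReal_lt_toReal hc' (by simp)).2 hc
    obtain ⟨K, hK, hKε⟩ := htight ((1 - c.toReal) / 2) (by linarith)
    refine lt_of_lt_of_le ?_ ((hmK hK hKε).trans (measure_mono (image_subset_range _ _)))
    rw [ENNReal.lt_ofReal_iff_toReal_lt hc']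
    linarith
  have hmap : (m.comap ι).map ι = m := by
    rw [hme.map_comap]
    refine Measure.restrict_eq_self_of_ae_mem ?_
    exact (prob_compl_eq_zero_iff hme.measurableSet_range).2 hrange
  have hν : IsProbabilityMeasure (m.comap ι) := by
    refine ⟨?_⟩
    rw [hme.comap_apply, image_univ, hrange]
  have hνint (g : (ℕ → unitInterval) →ᵇ ℝ) :
      ∫ y, g (ι y) ∂(m.comap ι) = Λ (g.compContinuous ιC) := by
    rw [← hme.integral_map (fun z => g z), hmap, hmint]
    rfl
  have hle (f : Y →ᵇ ℝ) : Λ f ≤ ∫ y, f y ∂(m.comap ι) := by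
    set M : ℝ := 2 * ‖f‖ + 1 with hM
    have hM0 : 0 < M := by positivity
    refine le_of_forall_pos_le_add fun δ hδ => ?_
    obtain ⟨K, hK, hKε⟩ := htight (δ / (2 * M)) (by positivity)
    have : CompactSpace K := isCompact_iff_compactSpace.1 hK
    have hemb : IsClosedEmbedding (ι ∘ ((↑) : K → Y)) :=
      (hι.continuous.comp continuous_subtype_val).isClosedEmbedding
        (hι.injective.comp Subtype.val_injective)
    obtain ⟨g, hgf, hg⟩ := BoundedContinuousFunction.exists_extension_norm_eq_of_isClosedEmbedding
      (f.compContinuous ⟨((↑) : K → Y), continuous_subtype_val⟩) hemb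
    have hgnorm : ‖g‖ ≤ ‖f‖ := hgf.trans_le (f.norm_compContinuous_le _)
    have hgK (y : Y) (hy : y ∈ K) : g (ι y) = f y := congrFun hg ⟨y, hy⟩
    let h : Y →ᵇ ℝ := f - g.compContinuous ιC
    have hhK (y : Y) (hy : y ∈ K) : h y = 0 := sub_eq_zero.2 (hgK y hy).symm
    have hhM (y : Y) : |h y| ≤ M := by
      have e1 := f.norm_coe_le_norm y
      have e2 := g.norm_coe_le_norm (ι y)
      rw [Real.norm_eq_abs] at e1 e2
      have e3 : |h y| ≤ |f y| + |g (ι y)| := abs_sub _ _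
      linarith
    have hΛh : Λ h ≤ δ / 2 := by
      have e := hKε (M⁻¹ • h)
        (fun y => by
          change M⁻¹ * h y ≤ 1
          rw [inv_mul_le_iff₀ hM0, mul_one]
          exact (le_abs_self _).trans (hhM y))
        (fun y hy => by simp [hhK y hy])
      rw [map_smul, smul_eq_mul, inv_mul_le_iff₀ hM0] at e
      exact e.trans_eq (by field_simp)
    have hνK : (m.comap ι).real Kᶜ ≤ δ / (2 * M) := by
      have e : ENNReal.ofReal (1 - δ / (2 * M)) ≤ (m.comap ι) K := by
        rw [hme.comap_apply]
        exact hmK hK hKε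
      have e' := (ENNReal.ofReal_le_iff_le_toReal (measure_ne_top _ _)).1 e
      rw [probReal_compl_eq_one_sub hK.measurableSet, measureReal_def]
      linarith
    have hνh : -(δ / 2) ≤ ∫ y, h y ∂(m.comap ι) := by
      have e : ∫ y, (Kᶜ).indicator (fun _ => -M) y ∂(m.comap ι) ≤ ∫ y, h y ∂(m.comap ι) := by
        refine integral_mono ((integrable_const _).indicator hK.measurableSet.compl)
          (h.integrable _) fun y => ?_
        by_cases hy : y ∈ K
        · simp [hy, hhK]
        · simpa [hy] using (abs_le.1 (hhM y)).1
      rw [integral_indicator_const _ hK.measurableSet.compl, smul_eq_mul] at e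
      rw [le_div_iff₀ (by positivity)] at hνK
      linarith
    have hf1 : Λ f = Λ h + Λ (g.compContinuous ιC) := by rw [← map_add]; simp [h]
    have hf2 : ∫ y, f y ∂(m.comap ι) = ∫ y, h y ∂(m.comap ι) + ∫ y, g (ι y) ∂(m.comap ι) := by
      have e := integral_add (h.integrable (m.comap ι)) ((g.compContinuous ιC).integrable _)
      simpa [h, ιC] using e
    rw [hf1, hf2, hνint]
    linarith
  refine ⟨m.comap ι, hν, fun f => le_antisymm ?_ (hle f)⟩
  have := hle (-f)
  simp only [map_neg, BoundedContinuousFunction.coe_neg, Pi.neg_apply, integral_neg] at this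
  linarith

section Lift

variable {X Y Γ : Type*} [MeasurableSpace X] {μ : Measure X} [TopologicalSpace Y] {p : Y → X}

/-- The cone of bounded continuous functions on `Y` dominating the pull-back of an integrable
function on `X` of nonnegative integral. -/
def dominatingCone (μ : Measure X) (p : Y → X) : PointedCone ℝ (Y →ᵇ ℝ) where
  carrier := {f | ∃ g : X → ℝ, Measurable g ∧ Integrable g μ ∧ 0 ≤ ∫ x, g x ∂μ ∧
    ∀ y, g (p y) ≤ f y}
  zero_mem' := ⟨0, measurable_zero, integrable_zero _ _ _, by simp, fun _ => le_rfl⟩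
  add_mem' := by
    rintro f f' ⟨g, hgm, hgi, hg0, hgf⟩ ⟨g', hgm', hgi', hg0', hgf'⟩
    refine ⟨g + g', hgm.add hgm', hgi.add hgi', ?_, fun y => add_le_add (hgf y) (hgf' y)⟩
    rw [integral_add' hgi hgi']
    exact add_nonneg hg0 hg0'
  smul_mem' := by
    rintro c f ⟨g, hgm, hgi, hg0, hgf⟩
    refine ⟨fun x => (c : ℝ) * g x, hgm.const_mul _, hgi.const_mul _, ?_,
      fun y => mul_le_mul_of_nonneg_left (hgf y) c.2⟩
    rw [integral_const_mul]
    exact mul_nonneg c.2 hg0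

/-- The Koopman representation of a commutative monoid acting by continuous maps on bounded
continuous functions. -/
noncomputable def koopman [CommMonoid Γ] [MulAction Γ Y]
    (hS : ∀ γ : Γ, Continuous fun y : Y => γ • y) : Γ →* Module.End ℝ (Y →ᵇ ℝ) where
  toFun γ := (BoundedContinuousFunction.compContinuousCLM ℝ ℝ
    (⟨fun y => γ • y, hS γ⟩ : C(Y, Y))).toLinearMap
  map_one' := by
    ext f y
    exact congrArg f (one_smul Γ y)
  map_mul' γ δ := by
    ext f y
    exact congrArg f (by rw [mul_comm]; exact mul_smul δ γ y)

/-- There is an invariant linear functional on bounded continuous functions on `Y` which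
dominates integration over `X`. -/
lemma exists_invariant_linearMap_integral_le [IsProbabilityMeasure μ] (hfull : μ (range p) = 1)
    [CommMonoid Γ] [MulAction Γ Y] [MulAction Γ X]
    (hS : ∀ γ : Γ, Continuous fun y : Y => γ • y)
    (hT : ∀ γ : Γ, MeasurePreserving (fun x : X => γ • x) μ μ)
    (hcomm : ∀ (γ : Γ) (y : Y), p (γ • y) = γ • p y) :
    ∃ Λ : (Y →ᵇ ℝ) →ₗ[ℝ] ℝ, Λ 1 = 1 ∧ (∀ γ f, Λ (koopman hS γ f) = Λ f) ∧
      ∀ (f : Y →ᵇ ℝ) (g : X → ℝ), Measurable g → Integrable g μ → (∀ y, g (p y) ≤ f y) →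
        ∫ x, g x ∂μ ≤ Λ f := by
  obtain ⟨Λ, hΛ1, hΛinv, hΛpos⟩ := exists_invariant_linearMap_nonneg (U := koopman hS)
    (fun γ f => f.norm_compContinuous_le _) (dominatingCone μ p)
    (by
      rintro γ f ⟨g, hgm, hgi, hg0, hgf⟩
      refine ⟨fun x => g (γ • x), hgm.comp (hT γ).measurable,
        (hT γ).integrable_comp_of_integrable hgi, ?_, fun y => ?_⟩
      · rw [← integral_map (hT γ).aemeasurable (by rw [(hT γ).map_eq]; exact hgi.1), (hT γ).map_eq]
        exact hg0
      · exact (congrArg g (hcomm γ y)).symm.trans_le (hgf (γ • y)))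
    1 (fun γ => rfl)
    (fun f => ⟨0, measurable_zero, integrable_zero _ _ _, by simp, fun y => by
      simpa using neg_le_iff_add_nonneg'.1 (neg_le_of_abs_le (f.norm_coe_le_norm y))⟩)
    (by
      rintro c ⟨g, hgm, hgi, hg0, hgf⟩
      have hle : ∀ᵐ x ∂μ, g x ≤ c := by
        have hsub : range p ⊆ {x | g x ≤ c} := by
          rintro _ ⟨y, rfl⟩
          simpa using hgf y
        refine (prob_compl_eq_zero_iff (hgm measurableSet_Iic)).2 (le_antisymm prob_le_one ?_)
        exact hfull.symm.le.trans (measure_mono hsub)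
      have h := integral_mono_ae hgi (integrable_const c) hle
      simp only [integral_const, probReal_univ, one_smul] at h
      exact hg0.trans h)
  refine ⟨Λ, hΛ1, hΛinv, fun f g hgm hgi hgf => ?_⟩
  have h := hΛpos (f - (∫ x, g x ∂μ) • 1) ⟨fun x => g x - ∫ x, g x ∂μ, hgm.sub_const _,
    hgi.sub (integrable_const _), by simp [integral_sub hgi (integrable_const _)],
    fun y => by simpa using hgf y⟩
  rw [map_sub, map_smul, hΛ1, smul_eq_mul, mul_one] at h
  linarith

lemma linearMap_apply_le_measureReal_image [IsProbabilityMeasure μ] {Λ : (Y →ᵇ ℝ) →ₗ[ℝ] ℝ}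
    (hΛ : ∀ (f : Y →ᵇ ℝ) (g : X → ℝ), Measurable g → Integrable g μ → (∀ y, g (p y) ≤ f y) →
        ∫ x, g x ∂μ ≤ Λ f) {f : Y →ᵇ ℝ} {F : Set Y} (hf1 : ∀ y, f y ≤ 1)
    (hf0 : ∀ y ∉ F, f y ≤ 0) : Λ f ≤ μ.real (p '' F) := by
  have hB : MeasurableSet (toMeasurable μ (p '' F)) := measurableSet_toMeasurable _ _
  have h := hΛ (-f) (fun x => (toMeasurable μ (p '' F)).indicator (fun _ => -1) x)
    (measurable_const.indicator hB) ((integrable_const _).indicator hB) (fun y => by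
      by_cases hy : p y ∈ toMeasurable μ (p '' F)
      · simpa [hy] using hf1 y
      · have : y ∉ F := fun hyF => hy (subset_toMeasurable _ _ (mem_image_of_mem p hyF))
        simpa [hy] using hf0 y this)
  rw [integral_indicator_const _ hB, measureReal_def, measure_toMeasurable, ← measureReal_def,
    map_neg, smul_eq_mul] at h
  linarith

variable [StandardBorelSpace X] [PolishSpace Y] [MeasurableSpace Y] [BorelSpace Y]

/-- A probability measure on `Y` whose integrals are dominated by the masses of images in `X`
projects to `μ`. -/
lemma map_eq_of_integral_le_measureReal_image [IsProbabilityMeasure μ] (hp : Measurable p)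
    (hfib : ∀ᵐ x ∂μ, IsCompact (p ⁻¹' {x})) {ν : Measure Y} [IsProbabilityMeasure ν]
    (hν : ∀ (f : Y →ᵇ ℝ) (F : Set Y), (∀ y, f y ≤ 1) → (∀ y ∉ F, f y ≤ 0) →
      ∫ y, f y ∂ν ≤ μ.real (p '' F)) : ν.map p = μ := by
  let := TopologicalSpace.upgradeIsCompletelyMetrizable Y
  have : IsProbabilityMeasure (ν.map p) := Measure.isProbabilityMeasure_map hp.aemeasurable
  obtain ⟨r, hr, hr0, hrlim⟩ := exists_seq_strictAnti_tendsto (0 : ℝ)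
  have hclosed {F : Set Y} (hF : IsClosed F) : ν F ≤ μ (p '' F) := by
    by_contra! hlt
    have hinter : ⋂ n, Metric.cthickening (r n) F = F := by
      refine Subset.antisymm (fun y hy => ?_)
        (subset_iInter fun n => Metric.self_subset_cthickening F)
      rw [← hF.closure_eq, Metric.closure_eq_iInter_cthickening]
      refine mem_iInter₂.2 fun δ hδ => ?_
      obtain ⟨n, hn⟩ := (hrlim.eventually_lt_const hδ).exists
      exact Metric.cthickening_mono hn.le F (mem_iInter.1 hy n)
    obtain ⟨n, hn⟩ := exists_measure_image_lt_of_antitone hp hfib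
      (fun a b hab => Metric.cthickening_mono (hr.antitone hab) F)
      (fun n => Metric.isClosed_cthickening) (c := ν F) (by rwa [hinter])
    refine absurd hn (not_lt.2 ?_)
    obtain ⟨f, hf0, hf1, hfF, hfU⟩ := hF.exists_boundedContinuousFunction_zero_one
      Metric.isOpen_thickening (Metric.self_subset_thickening (hr0 n) F)
    have hle : ν.real F ≤ ∫ y, f y ∂ν := by
      rw [← integral_indicator_one hF.measurableSet]
      refine integral_mono ((integrable_const 1).indicator hF.measurableSet) (f.integrable ν)
        fun y => ?_
      by_cases hy : y ∈ F
      · simpa [hy] using (hfF y hy).ge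
      · simpa [hy] using! hf0 y
    have hle' := hle.trans (hν f _ hf1 fun y hy =>
      (hfU y (mt (fun h => Metric.thickening_subset_cthickening _ _ h) hy)).le)
    exact (ENNReal.toReal_le_toReal (measure_ne_top _ _) (measure_ne_top _ _)).1 hle'
  have hle : ν.map p ≤ μ := by
    refine Measure.le_iff.2 fun A hA => ?_
    rw [Measure.map_apply hp hA, (hp hA).measure_eq_iSup_isClosed_of_ne_top (measure_ne_top _ _)]
    refine iSup₂_le fun F hFA => iSup_le fun hF => (hclosed hF).trans (measure_mono ?_)
    exact image_subset_iff.2 hFA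
  exact Measure.eq_of_le_of_measure_univ_eq hle (by simp)

end Lift

/-- **Theorem 1.2** (commutative-monoid case). Let `X` be a standard Borel space with a Borel
probability measure `μ`, `Y` a Polish space, and `p : Y → X` a Borel map with `μ (range p) = 1`
whose fibers are compact for `μ`-a.e. `x`. Let a commutative monoid `Γ` act on `Y` by continuous
maps and on `X` by `μ`-preserving measurable maps, the actions commuting with `p`. Then there is
a `Γ`-invariant Borel probability measure `ν` on `Y` with `ν.map p = μ`. -/
theorem lift_invariant_measure_comm_monoid
    {X : Type*} [MeasurableSpace X] [StandardBorelSpace X]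
    (μ : Measure X) [IsProbabilityMeasure μ]
    {Y : Type*} [TopologicalSpace Y] [PolishSpace Y] [MeasurableSpace Y] [BorelSpace Y]
    (p : Y → X) (hp : Measurable p)
    (hfull : μ (Set.range p) = 1)
    (hfib : ∀ᵐ x ∂μ, IsCompact (p ⁻¹' {x}))
    {Γ : Type*} [CommMonoid Γ] [MulAction Γ Y] [MulAction Γ X]
    (hScont : ∀ γ : Γ, Continuous (fun y : Y => γ • y))
    (hTmeas : ∀ γ : Γ, Measurable (fun x : X => γ • x))
    (hTμ : ∀ γ : Γ, μ.map (fun x : X => γ • x) = μ)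
    (hcomm : ∀ (γ : Γ) (y : Y), p (γ • y) = γ • (p y)) :
    ∃ ν : Measure Y, IsProbabilityMeasure ν ∧
      (∀ γ : Γ, ν.map (fun y : Y => γ • y) = ν) ∧ ν.map p = μ := by
  have hT (γ : Γ) : MeasurePreserving (fun x : X => γ • x) μ μ := ⟨hTmeas γ, hTμ γ⟩
  obtain ⟨Λ, hΛ1, hΛinv, hΛ⟩ := exists_invariant_linearMap_integral_le hfull hScont hT hcomm
  obtain ⟨ν, hν, hνΛ⟩ := exists_isProbabilityMeasure_integral_eq_of_tight Λ
    (fun f hf => by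
      simpa using hΛ f 0 measurable_zero (integrable_zero _ _ _) fun y => hf y) hΛ1
    (fun ε hε => by
      obtain ⟨K, hK, hKε⟩ := exists_isCompact_measure_image_compl_le hp hfib
        (ENNReal.ofReal_pos.2 hε).ne'
      refine ⟨K, hK, fun f hf1 hf0 => ?_⟩
      refine (linearMap_apply_le_measureReal_image hΛ (F := Kᶜ) hf1
        fun y hy => hf0 y (not_not.1 hy)).trans ?_
      exact ENNReal.toReal_le_of_le_ofReal hε.le hKε)
  refine ⟨ν, hν, fun γ => ?_, map_eq_of_integral_le_measureReal_image hp hfib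
    fun f F hf1 hf0 => (hνΛ f).trans_le (linearMap_apply_le_measureReal_image hΛ hf1 hf0)⟩
  have hm : Measurable fun y : Y => γ • y := (hScont γ).measurable
  have := Measure.isProbabilityMeasure_map (μ := ν) hm.aemeasurable
  refine ext_of_forall_integral_eq_of_IsFiniteMeasure fun f => ?_
  rw [integral_map hm.aemeasurable f.continuous.aestronglyMeasurable, hνΛ, ← hΛinv γ f, ← hνΛ]
  rfl
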